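/- Let L, N be a lightlike frame along the unit-speed spacelike curve γ̂ and fix u ∈ I. A point x ∈ ℝ³₁ satisfies ⟨x − γ̂(u), x − γ̂(u)⟩ = 0 and ⟨x − γ̂(u), e(u)⟩ = 0 if and only if there exists v ∈ ℝ such that x = γ̂(u) + v L(u) or x = γ̂(u) + v N(u). (Hence the discriminant set of G(u,x) = ⟨x − γ̂(u), x − γ̂(u)⟩ equals the union of the discriminant sets of H_L and H_N, i.e. the union of the images of the osculating and transversal lightlike surfaces.) -/

import Mathlib

open scoped Topology

noncomputable section

/-- Points/vectors of Lorentz–Minkowski 3-space `ℝ³₁`. -/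
abbrev R3 : Type := Fin 3 → ℝ

/-- The Lorentz–Minkowski scalar product `⟨x,y⟩ = -x₀y₀ + x₁y₁ + x₂y₂`. -/
def mink (x y : R3) : ℝ := -(x 0 * y 0) + x 1 * y 1 + x 2 * y 2

/-- `(L, N)` is a lightlike frame along the unit-speed spacelike curve `γ` on `I`:
`γ, L, N` are smooth on `I`, `⟨e,e⟩ = 1` (with `e = γ'`), `⟨e,L⟩ = ⟨e,N⟩ = 0`,
`⟨L,L⟩ = ⟨N,N⟩ = 0` and `⟨L,N⟩ = 1` on `I`. -/
structure LightlikeFrame (I : Set ℝ) (γ L N : ℝ → R3) : Prop where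
  smooth_gamma : ContDiffOn ℝ (⊤ : ℕ∞) γ I
  smooth_L : ContDiffOn ℝ (⊤ : ℕ∞) L I
  smooth_N : ContDiffOn ℝ (⊤ : ℕ∞) N I
  unit_speed : ∀ u ∈ I, mink (deriv γ u) (deriv γ u) = 1
  eL : ∀ u ∈ I, mink (deriv γ u) (L u) = 0
  eN : ∀ u ∈ I, mink (deriv γ u) (N u) = 0
  LL : ∀ u ∈ I, mink (L u) (L u) = 0
  NN : ∀ u ∈ I, mink (N u) (N u) = 0
  LN : ∀ u ∈ I, mink (L u) (N u) = 1

/-- `α_L = ⟨γ'', L⟩`. -/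
def alphaL (γ L : ℝ → R3) (u : ℝ) : ℝ := mink (deriv (deriv γ) u) (L u)

/-- `α_N = ⟨γ'', N⟩`. -/
def alphaN (γ N : ℝ → R3) (u : ℝ) : ℝ := mink (deriv (deriv γ) u) (N u)

/-- `α_G = ⟨L, N'⟩`. -/
def alphaG (L N : ℝ → R3) (u : ℝ) : ℝ := mink (L u) (deriv N u)

/-- `σ_L = α_L' + α_L α_G`. -/
def sigmaL (γ L N : ℝ → R3) (u : ℝ) : ℝ :=
  deriv (alphaL γ L) u + alphaL γ L u * alphaG L N u

/-- `σ_N = α_N' - α_N α_G`. -/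
def sigmaN (γ L N : ℝ → R3) (u : ℝ) : ℝ :=
  deriv (alphaN γ N) u - alphaN γ N u * alphaG L N u

/-! Along the curve, `e = γ'`, `L` and `N` form a basis of `ℝ³₁` whose dual basis is `⟨·, e⟩`,
`⟨·, N⟩`, `⟨·, L⟩`. Expanding `w = x - γ(u)` in it gives `⟨w, w⟩ = ⟨w, e⟩² + 2 ⟨w, L⟩ ⟨w, N⟩`, so
the two equations say that `⟨w, e⟩` and one of `⟨w, L⟩`, `⟨w, N⟩` vanish, which leaves a multiple of
`L` or of `N`. -/

section PseudoOrthonormal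

variable {R M : Type*} [CommRing R] [AddCommGroup M] [Module R M]

theorem dualBases_of_finrank_le_card [Nontrivial R] [Module.Free R M] [Module.Finite R M]
    {ι : Type*} [Fintype ι] {v : ι → M} {f : ι → Module.Dual R M}
    (hcard : Module.finrank R M ≤ Fintype.card ι) (hsame : ∀ i, f i (v i) = 1)
    (hne : Pairwise fun i j ↦ f i (v j) = 0) :
    Module.DualBases v f where
  eval_same := hsame
  eval_of_ne := hne
  finite _ := Set.toFinite _
  total := by
    have hsurj : Function.Surjective (LinearMap.pi f) := fun c ↦ by
      refine ⟨∑ j, c j • v j, funext fun i ↦ ?_⟩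
      rw [LinearMap.pi_apply, map_sum, Fintype.sum_eq_single i fun j hj ↦ ?_]
      · rw [map_smul, hsame, smul_eq_mul, mul_one]
      · rw [map_smul, hne hj.symm, smul_zero]
    have hbij := OrzechProperty.bijective_of_surjective_of_finrank_le (LinearMap.pi f) hsurj
      (hcard.trans_eq (Module.finrank_fintype_fun_eq_card R).symm)
    exact @fun _ _ h ↦ hbij.injective (funext h)

/-- A pseudo-orthonormal triple for the bilinear form `B`: a unit vector `e` and two isotropic
vectors `l`, `n`, orthogonal to `e` and normalized by `B l n = 1`. It is the value at one point of
a lightlike frame. Each pairing is recorded in one order only, as `B` is symmetric in all uses. -/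
structure IsPseudoOrthonormal (B : LinearMap.BilinForm R M) (e l n : M) : Prop where
  apply_e_e : B e e = 1
  apply_e_l : B e l = 0
  apply_e_n : B e n = 0
  apply_l_l : B l l = 0
  apply_n_n : B n n = 0
  apply_l_n : B l n = 1

namespace IsPseudoOrthonormal

variable {B : LinearMap.BilinForm R M} {e l n : M}

theorem swap (h : IsPseudoOrthonormal B e l n) (hB : B.IsSymm) : IsPseudoOrthonormal B e n l where
  apply_e_e := h.apply_e_e
  apply_e_l := h.apply_e_n
  apply_e_n := h.apply_e_l
  apply_l_l := h.apply_n_n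
  apply_n_n := h.apply_l_l
  apply_l_n := (hB.eq n l).trans h.apply_l_n

variable [Module.Free R M]

theorem dualBases (h : IsPseudoOrthonormal B e l n) (hB : B.IsSymm)
    (hM : Module.finrank R M = 3) : Module.DualBases ![e, l, n] ![B e, B n, B l] := by
  have : Nontrivial R := by
    by_contra! hR
    simp [Module.finrank_subsingleton] at hM
  have : Module.Finite R M := Module.finite_of_finrank_pos (by lia)
  have hle : B l e = 0 := (hB.eq l e).trans h.apply_e_l
  have hne : B n e = 0 := (hB.eq n e).trans h.apply_e_n
  have hnl : B n l = 1 := (hB.eq n l).trans h.apply_l_n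
  refine dualBases_of_finrank_le_card (by simp [hM]) (fun i ↦ ?_) fun i j hij ↦ ?_
  · fin_cases i
    exacts [h.apply_e_e, hnl, h.apply_l_n]
  · fin_cases i <;> fin_cases j
    exacts [absurd rfl hij, h.apply_e_l, h.apply_e_n, hne, absurd rfl hij, h.apply_n_n,
      hle, h.apply_l_l, absurd rfl hij]

theorem eq_add_add (h : IsPseudoOrthonormal B e l n) (hB : B.IsSymm)
    (hM : Module.finrank R M = 3) (w : M) : w = B w e • e + B w n • l + B w l • n := by
  have hsum := (h.dualBases hB hM).basis.sum_repr w
  rw [hB.eq w e, hB.eq w n, hB.eq w l]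
  simpa [Fin.sum_univ_three] using hsum.symm

theorem apply_self_eq (h : IsPseudoOrthonormal B e l n) (hB : B.IsSymm)
    (hM : Module.finrank R M = 3) (w : M) : B w w = B w e ^ 2 + 2 * (B w l * B w n) :=
  calc B w w = B w (B w e • e + B w n • l + B w l • n) :=
        congrArg (B w) (h.eq_add_add hB hM w)
    _ = B w e ^ 2 + 2 * (B w l * B w n) := by
        simp only [map_add, map_smul, smul_eq_mul]
        ring

theorem exists_eq_smul_iff (h : IsPseudoOrthonormal B e l n) (hB : B.IsSymm)
    (hM : Module.finrank R M = 3) (w : M) : (∃ v : R, w = v • l) ↔ B w e = 0 ∧ B w l = 0 := by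
  constructor
  · rintro ⟨v, rfl⟩
    simp [hB.eq l e, h.apply_e_l, h.apply_l_l]
  · rintro ⟨hwe, hwl⟩
    exact ⟨B w n, by simpa [hwe, hwl] using h.eq_add_add hB hM w⟩

theorem isotropic_and_orthogonal_iff [NoZeroDivisors R] [NeZero (2 : R)]
    (h : IsPseudoOrthonormal B e l n) (hB : B.IsSymm) (hM : Module.finrank R M = 3) (w : M) :
    B w w = 0 ∧ B w e = 0 ↔ ∃ v : R, w = v • l ∨ w = v • n := by
  rw [exists_or, h.exists_eq_smul_iff hB hM, (h.swap hB).exists_eq_smul_iff hB hM, ← and_or_left,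
    and_comm]
  refine and_congr_right fun hwe ↦ ?_
  have hww : B w w = 2 * (B w l * B w n) := by simpa [hwe] using h.apply_self_eq hB hM w
  rw [hww, mul_eq_zero_iff_left (NeZero.ne 2), mul_eq_zero]

end IsPseudoOrthonormal

theorem discriminant_of_G_general [Module.Free R M] [NoZeroDivisors R] [NeZero (2 : R)]
    {B : LinearMap.BilinForm R M} (hB : B.IsSymm) (hM : Module.finrank R M = 3) {e l n : M}
    (h : IsPseudoOrthonormal B e l n) (p x : M) :
    B (x - p) (x - p) = 0 ∧ B (x - p) e = 0 ↔ ∃ v : R, x = p + v • l ∨ x = p + v • n := by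
  simpa only [sub_eq_iff_eq_add'] using h.isotropic_and_orthogonal_iff hB hM (x - p)

end PseudoOrthonormal

/-- The scalar product `mink` of `ℝ³₁` as a bilinear form, which makes the theory of bilinear forms
available for it. -/
def minkForm : LinearMap.BilinForm ℝ R3 := Matrix.toBilin' (Matrix.diagonal ![-1, 1, 1])

theorem minkForm_apply (x y : R3) : minkForm x y = mink x y := by
  simp [minkForm, mink, Matrix.toBilin'_apply, Fin.sum_univ_three]

theorem minkForm_isSymm : minkForm.IsSymm :=
  Matrix.isSymm_toBilin'_iff_isSymm.mpr (Matrix.isSymm_diagonal _)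

theorem LightlikeFrame.isPseudoOrthonormal {I : Set ℝ} {γ L N : ℝ → R3}
    (hframe : LightlikeFrame I γ L N) {u : ℝ} (hu : u ∈ I) :
    IsPseudoOrthonormal minkForm (deriv γ u) (L u) (N u) := by
  constructor <;> rw [minkForm_apply]
  exacts [hframe.unit_speed u hu, hframe.eL u hu, hframe.eN u hu, hframe.LL u hu, hframe.NN u hu,
    hframe.LN u hu]

/-- `x` satisfies `⟨x - γ̂(u), x - γ̂(u)⟩ = 0` and `⟨x - γ̂(u), e(u)⟩ = 0`
iff `x = γ̂(u) + v L(u)` or `x = γ̂(u) + v N(u)` for some `v ∈ ℝ`. -/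
theorem discriminant_of_G (a b : ℝ) (γ L N : ℝ → R3)
    (hframe : LightlikeFrame (Set.Ioo a b) γ L N) :
    ∀ u ∈ Set.Ioo a b, ∀ x : R3,
      ((mink (x - γ u) (x - γ u) = 0 ∧ mink (x - γ u) (deriv γ u) = 0) ↔
        ∃ v : ℝ, x = γ u + v • L u ∨ x = γ u + v • N u) := by
  intro u hu x
  simpa only [minkForm_apply] using discriminant_of_G_general minkForm_isSymm
    (Module.finrank_fin_fun ℝ) (hframe.isPseudoOrthonormal hu) (γ u) x
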